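/- arXiv:2604.01012 — 2 statements merged into one kernel-verified Lean document; each statement's English description precedes it below -/
import Mathlib

section
/- Let n ≥ 2 and d ≥ 1. The sum-exclude-self map restricted to d-bit inputs, i.e., the map F : (Fin n → Fin (2^d)) → (Fin n → ℤ) defined by (F In) i = ∑_{j ≠ i} (In j : ℤ), is injective; consequently its image has cardinality exactly 2^(n·d). -/
/-- On an index type with at least two elements, an integer family is determined by its
sums excluding one entry. -/
theorem sum_compl_singleton_injective {ι : Type*} [Fintype ι] [DecidableEq ι]
    (hι : 2 ≤ Fintype.card ι) :
    Function.Injective (fun (a : ι → ℤ) (i : ι) => ∑ j ∈ ({i}ᶜ : Finset ι), a j) := by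
  intro a b h
  have split (c : ι → ℤ) (i : ι) : ∑ j ∈ ({i}ᶜ : Finset ι), c j = ∑ j, c j - c i := by
    rw [← Finset.sum_compl_add_sum {i} c, Finset.sum_singleton, add_sub_cancel_right]
  have diff (i : ι) : ∑ j, a j - a i = ∑ j, b j - b i := by
    rw [← split, ← split]
    exact congrFun h i
  have total : ((Fintype.card ι : ℤ) - 1) * ∑ j, a j = (Fintype.card ι - 1) * ∑ j, b j := by
    have hsum := Finset.sum_congr (rfl : (Finset.univ : Finset ι) = _) fun i _ => diff i
    simp only [Finset.sum_sub_distrib, Finset.sum_const, Finset.card_univ, nsmul_eq_mul] at hsum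
    linarith
  have sums_eq := mul_left_cancel₀ (by lia) total
  funext i
  linarith [diff i]

theorem sum_exclude_self_dbit_injective_card (n d : ℕ) (hn : 2 ≤ n) (hd : 1 ≤ d) :
    Function.Injective
      (fun (In : Fin n → Fin (2 ^ d)) (i : Fin n) =>
        ∑ j ∈ ({i}ᶜ : Finset (Fin n)), ((In j : ℕ) : ℤ)) ∧
    Nat.card
      (Set.range (fun (In : Fin n → Fin (2 ^ d)) (i : Fin n) =>
        ∑ j ∈ ({i}ᶜ : Finset (Fin n)), ((In j : ℕ) : ℤ))) = 2 ^ (n * d) := by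
  have inj : Function.Injective
      (fun (In : Fin n → Fin (2 ^ d)) (i : Fin n) =>
        ∑ j ∈ ({i}ᶜ : Finset (Fin n)), ((In j : ℕ) : ℤ)) :=
    (sum_compl_singleton_injective (by simpa using hn)).comp
      (Nat.cast_injective.comp Fin.val_injective).comp_left
  refine ⟨inj, ?_⟩
  rw [Nat.card_range_of_injective inj]
  simp [← pow_mul, mul_comm]
end

section
/- Let n ≥ 2, d ≥ 1, let S ⊆ Fin n be a set of indices with |S| ≤ n − 2, and let i : Fin n be any index. Then there exist two input arrays In, In' : Fin n → Fin (2^d) that agree on all indices in S but satisfy ∑_{j ≠ i} (In j : ℤ) ≠ ∑_{j ≠ i} (In' j : ℤ). In particular, the correct value of Out[i] is not determined by the values of the input at the positions in S. -/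
theorem first_pass_not_determined (n d : ℕ) (hn : 2 ≤ n) (hd : 1 ≤ d)
    (S : Finset (Fin n)) (hS : S.card ≤ n - 2) (i : Fin n) :
    ∃ In In' : Fin n → Fin (2 ^ d),
      (∀ j ∈ S, In j = In' j) ∧
      (∑ j ∈ ({i}ᶜ : Finset (Fin n)), ((In j : ℕ) : ℤ)) ≠
        (∑ j ∈ ({i}ᶜ : Finset (Fin n)), ((In' j : ℕ) : ℤ)) := by
  have hpow : 1 < 2 ^ d := Nat.one_lt_two_pow (by omega)
  obtain ⟨k, hk⟩ : ∃ k, k ∉ insert i S := by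
    by_contra! h
    have hcard : (insert i S).card = n := by
      rw [Finset.eq_univ_of_forall h, Finset.card_univ, Fintype.card_fin]
    have hle := Finset.card_insert_le i S
    omega
  obtain ⟨hki, hkS⟩ : k ≠ i ∧ k ∉ S := by simpa using hk
  let zero : Fin (2 ^ d) := ⟨0, by omega⟩
  let one : Fin (2 ^ d) := ⟨1, hpow⟩
  refine ⟨fun _ => zero, Function.update (fun _ => zero) k one, fun j hj => ?_, ne_of_lt ?_⟩
  · rw [Function.update_of_ne (ne_of_mem_of_not_mem hj hkS)]
  · refine Finset.sum_lt_sum (fun j _ => ?_) ⟨k, by simpa using hki, ?_⟩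
    · simp [zero]
    · simp [zero, one]
end
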